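/- Assume (A,C) is observable with observability index ℓ. Let w be a trajectory of length T of the LTI system, let ℓ ≤ L ≤ T, and suppose rank(𝓗_L(w)) = mL + n. Then a vector w̄ ∈ ℝ^{qL} belongs to the restricted behavior 𝓑|_L if and only if there exists α ∈ ℝ^{T−L+1} such that 𝓗_L(w)·α = w̄. -/

import Mathlib

/-!
The behavior `𝓑|_L` is the range of the linear map sending an initial state and an input sequence,
i.e. an element of `ℝ^n × ℝ^{mL}`, to the resulting stacked trajectory (`behavior_eq_range`), so it
is a subspace of dimension at most `mL + n`. Every column of the Hankel matrix is a window of the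
trajectory `w`, hence lies in `𝓑|_L` (`hankel_col_mem`) by time invariance. The column space is
therefore a subspace of `𝓑|_L`, and since its dimension `mL + n` is at least that of `𝓑|_L`, the two
coincide.
-/

open Matrix

/-- The input part `u(t) ∈ ℝ^m` of a combined variable `w(t) = (u(t); y(t)) ∈ ℝ^{m+p}`. -/
def uPart (m p : ℕ) (w : ℕ → Fin (m + p) → ℝ) (t : ℕ) : Fin m → ℝ :=
  fun i => w t (Fin.castAdd p i)

/-- The output part `y(t) ∈ ℝ^p` of a combined variable `w(t) = (u(t); y(t)) ∈ ℝ^{m+p}`. -/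
def yPart (m p : ℕ) (w : ℕ → Fin (m + p) → ℝ) (t : ℕ) : Fin p → ℝ :=
  fun j => w t (Fin.natAdd m j)

/-- `w = (u; y)` is a trajectory of length `T` of the LTI system `(A,B,C,D)`:
there is a state sequence `x` with `x(t+1) = A x(t) + B u(t)` for `t+1 < T` and
`y(t) = C x(t) + D u(t)` for `t < T`. -/
def IsTraj (m p n : ℕ) (A : Matrix (Fin n) (Fin n) ℝ) (B : Matrix (Fin n) (Fin m) ℝ)
    (C : Matrix (Fin p) (Fin n) ℝ) (D : Matrix (Fin p) (Fin m) ℝ)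
    (T : ℕ) (w : ℕ → Fin (m + p) → ℝ) : Prop :=
  ∃ x : ℕ → Fin n → ℝ,
    (∀ t, t + 1 < T → x (t + 1) = A *ᵥ x t + B *ᵥ uPart m p w t) ∧
    (∀ t, t < T → yPart m p w t = C *ᵥ x t + D *ᵥ uPart m p w t)

/-- The depth-`L` Hankel matrix of a sequence `w : {0,…,T−1} → ℝ^q`.  Its rows are indexed
by pairs `(b, i)` (block position `b ∈ {0,…,L−1}` and coordinate `i ∈ {0,…,q−1}`) and its
`j`-th column is the stacked vector `(w(j); …; w(j+L−1))`. -/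
def Hankel (q L T : ℕ) (w : ℕ → Fin q → ℝ) : Matrix (Fin L × Fin q) (Fin (T - L + 1)) ℝ :=
  fun bi j => w ((j : ℕ) + (bi.1 : ℕ)) bi.2

/-- The restricted behavior `𝓑|_L ⊆ ℝ^{qL}`: all stacked vectors `(w(0); …; w(L−1))` of
trajectories `w` of length `L`. -/
def Behavior (m p n : ℕ) (A : Matrix (Fin n) (Fin n) ℝ) (B : Matrix (Fin n) (Fin m) ℝ)
    (C : Matrix (Fin p) (Fin n) ℝ) (D : Matrix (Fin p) (Fin m) ℝ) (L : ℕ) :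
    Set (Fin L × Fin (m + p) → ℝ) :=
  { v | ∃ w : ℕ → Fin (m + p) → ℝ, IsTraj m p n A B C D L w ∧
      ∀ (t : Fin L) (i : Fin (m + p)), v (t, i) = w (t : ℕ) i }

/-- The order-`k` observability matrix `[C; CA; …; CA^{k−1}]`. -/
def obsMat (p n : ℕ) (A : Matrix (Fin n) (Fin n) ℝ) (C : Matrix (Fin p) (Fin n) ℝ) (k : ℕ) :
    Matrix (Fin k × Fin p) (Fin n) ℝ :=
  fun ri => (C * A ^ (ri.1 : ℕ)) ri.2

/-- `(A,C)` is observable with observability index `ℓ`: `[C; CA; …; CA^{ℓ−1}]` has rank `n`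
and `ℓ` is the smallest such integer. -/
def ObsIndex (p n : ℕ) (A : Matrix (Fin n) (Fin n) ℝ) (C : Matrix (Fin p) (Fin n) ℝ)
    (ℓ : ℕ) : Prop :=
  (obsMat p n A C ℓ).rank = n ∧ ∀ k < ℓ, (obsMat p n A C k).rank ≠ n

/-- The input at time `t` as a linear function of the initial state and the length-`L` input
sequence; zero for `t ≥ L`. -/
noncomputable def inputMap (m n L t : ℕ) :
    ((Fin n → ℝ) × (Fin L → Fin m → ℝ)) →ₗ[ℝ] (Fin m → ℝ) :=
  if h : t < L then LinearMap.proj (⟨t, h⟩ : Fin L) ∘ₗ LinearMap.snd ℝ _ _ else 0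

/-- The state at time `t` as a linear function of the initial state and the length-`L` input
sequence. -/
noncomputable def stateMap (m n L : ℕ) (A : Matrix (Fin n) (Fin n) ℝ)
    (B : Matrix (Fin n) (Fin m) ℝ) :
    ℕ → ((Fin n → ℝ) × (Fin L → Fin m → ℝ)) →ₗ[ℝ] (Fin n → ℝ)
  | 0 => LinearMap.fst ℝ _ _
  | t + 1 => A.mulVecLin ∘ₗ stateMap m n L A B t + B.mulVecLin ∘ₗ inputMap m n L t

/-- The stacked length-`L` trajectory as a linear function of the initial state and the input
sequence. -/
noncomputable def trajMap (m p n L : ℕ) (A : Matrix (Fin n) (Fin n) ℝ)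
    (B : Matrix (Fin n) (Fin m) ℝ) (C : Matrix (Fin p) (Fin n) ℝ) (D : Matrix (Fin p) (Fin m) ℝ) :
    ((Fin n → ℝ) × (Fin L → Fin m → ℝ)) →ₗ[ℝ] (Fin L × Fin (m + p) → ℝ) :=
  LinearMap.pi fun bi => Fin.addCases
    (fun i => LinearMap.proj i ∘ₗ inputMap m n L bi.1)
    (fun j => LinearMap.proj j ∘ₗ
      (C.mulVecLin ∘ₗ stateMap m n L A B bi.1 + D.mulVecLin ∘ₗ inputMap m n L bi.1))
    bi.2

lemma behavior_eq_range (m p n L : ℕ) (A : Matrix (Fin n) (Fin n) ℝ)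
    (B : Matrix (Fin n) (Fin m) ℝ) (C : Matrix (Fin p) (Fin n) ℝ) (D : Matrix (Fin p) (Fin m) ℝ) :
    Behavior m p n A B C D L = LinearMap.range (trajMap m p n L A B C D) := by
  ext v
  constructor
  · rintro ⟨w, ⟨x, hx, hy⟩, hv⟩
    refine ⟨(x 0, fun t => uPart m p w t), ?_⟩
    have hU : ∀ t, t < L →
        inputMap m n L t (x 0, fun t => uPart m p w t) = uPart m p w t := by
      intro t ht
      simp [inputMap, ht]
    have hX : ∀ t, t < L →
        stateMap m n L A B t (x 0, fun t => uPart m p w t) = x t := by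
      intro t
      induction t with
      | zero => intro _; simp [stateMap]
      | succ t ih =>
        intro ht
        simp [stateMap, ih (by omega), hU t (by omega), hx t ht]
    ext ⟨t, i⟩
    rw [hv]
    induction i using Fin.addCases with
    | left i => simp [trajMap, hU t t.2, uPart]
    | right j =>
      have := congrFun (hy t t.2) j
      simp [trajMap, hU t t.2, hX t t.2]
      simpa [yPart] using this.symm
  · rintro ⟨e, rfl⟩
    let w : ℕ → Fin (m + p) → ℝ := fun t => Fin.append (inputMap m n L t e)
      (C *ᵥ stateMap m n L A B t e + D *ᵥ inputMap m n L t e)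
    have hu : ∀ t, uPart m p w t = inputMap m n L t e := by
      intro t
      ext i
      simp [w, uPart]
    refine ⟨w, ⟨fun t => stateMap m n L A B t e, ?_, ?_⟩, ?_⟩
    · intro t _
      ext i
      simp [stateMap, hu]
    · intro t _
      ext j
      rw [hu]
      simp [yPart, w]
    · intro t i
      induction i using Fin.addCases with
      | left i => simp [trajMap, w]
      | right j => simp [trajMap, w]

lemma hankel_col_mem (m p n : ℕ) (A : Matrix (Fin n) (Fin n) ℝ)
    (B : Matrix (Fin n) (Fin m) ℝ) (C : Matrix (Fin p) (Fin n) ℝ) (D : Matrix (Fin p) (Fin m) ℝ)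
    (T L : ℕ) (hL : L ≤ T) (w : ℕ → Fin (m + p) → ℝ) (hw : IsTraj m p n A B C D T w)
    (j : Fin (T - L + 1)) :
    (Hankel (m + p) L T w).col j ∈ Behavior m p n A B C D L := by
  obtain ⟨x, hx, hy⟩ := hw
  have hj := j.2
  refine ⟨fun t => w (j + t), ⟨fun t => x (j + t), ?_, ?_⟩, fun _ _ => rfl⟩
  · intro t ht
    exact hx (j + t) (by omega)
  · intro t ht
    exact hy (j + t) (by omega)

/-- If `rank 𝓗_L(w) = mL + n` (with `ℓ ≤ L ≤ T`), then
`w̄ ∈ 𝓑|_L ↔ ∃ α, 𝓗_L(w)·α = w̄`. -/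
theorem stmt5 (m p n ℓ : ℕ) (hp : 1 ≤ p) (hn : 1 ≤ n)
    (A : Matrix (Fin n) (Fin n) ℝ) (B : Matrix (Fin n) (Fin m) ℝ)
    (C : Matrix (Fin p) (Fin n) ℝ) (D : Matrix (Fin p) (Fin m) ℝ)
    (hobs : ObsIndex p n A C ℓ)
    (T L : ℕ) (hL1 : ℓ ≤ L) (hL2 : L ≤ T)
    (w : ℕ → Fin (m + p) → ℝ) (hw : IsTraj m p n A B C D T w)
    (hrank : (Hankel (m + p) L T w).rank = m * L + n) :
    ∀ wbar : Fin L × Fin (m + p) → ℝ,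
      wbar ∈ Behavior m p n A B C D L ↔
        ∃ α : Fin (T - L + 1) → ℝ, (Hankel (m + p) L T w) *ᵥ α = wbar := by
  have hle : LinearMap.range (Hankel (m + p) L T w).mulVecLin ≤
      LinearMap.range (trajMap m p n L A B C D) := by
    rw [Matrix.range_mulVecLin, Submodule.span_le, ← behavior_eq_range]
    rintro _ ⟨j, rfl⟩
    exact hankel_col_mem m p n A B C D T L hL2 w hw j
  have hdim : Module.finrank ℝ (LinearMap.range (trajMap m p n L A B C D)) ≤
      Module.finrank ℝ (LinearMap.range (Hankel (m + p) L T w).mulVecLin) := by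
    refine (LinearMap.finrank_range_le _).trans ?_
    change _ ≤ (Hankel (m + p) L T w).rank
    rw [hrank, Module.finrank_prod, Module.finrank_pi_fintype ℝ (ι := Fin L)]
    simp [mul_comm, add_comm]
  have heq := Submodule.eq_of_le_of_finrank_le hle hdim
  intro wbar
  rw [behavior_eq_range, ← heq]
  rfl
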